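/- Let Ω ⊂ ℂ (identified with ℝ²) be a bounded open set, let r ≥ 2 and let p ∈ (2r/(r+2), 2). Then for every smooth function f : ℝ² → ℝ with compact support contained in Ω one has (∬_Ω |f|^r dx dy)^{1/r} ≤ ((p−1)/(2−p))^{(p−1)/p} · (√π · 2^{1/p})^{−1} · |Ω|^{1/r} · (Γ(2/p)·Γ(3−2/p))^{−1/2} · (∬_Ω |∇f|² dx dy)^{1/2}. -/

import Mathlib

open MeasureTheory Real

/-- Squared Euclidean norm of the gradient of `f : ℂ → ℝ` at `z`, under the
identification `ℂ ≅ ℝ²`. -/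
noncomputable def gradNormSq (f : ℂ → ℝ) (z : ℂ) : ℝ :=
  (fderiv ℝ f z 1) ^ 2 + (fderiv ℝ f z Complex.I) ^ 2

section

open Set Filter Topology

/-- The primitive of a continuous function bounded below by a positive constant is a bijection,
depending continuously on parameters, so two such primitives can be matched by a monotone map. -/
theorem exists_monotone_transport {X : Type*} [TopologicalSpace X] {φ ψ : X → ℝ → ℝ} {δ : X → ℝ}
    (hφ : Continuous (Function.uncurry φ)) (hψ : Continuous (Function.uncurry ψ))
    (hδ : ∀ x, 0 < δ x) (hδψ : ∀ x t, δ x ≤ ψ x t) (a c : ℝ) :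
    ∃ T : X → ℝ → ℝ, Continuous (Function.uncurry T) ∧
      (∀ x y, HasDerivAt (T x) (φ x y / ψ x (T x y)) y) ∧
      ∀ x y d, ∫ t in c..d, ψ x t = ∫ t in a..y, φ x t → T x y = d := by
  have hφx (x : X) : Continuous (φ x) := hφ.comp (Continuous.prodMk_right x)
  have hψx (x : X) : Continuous (ψ x) := hψ.comp (Continuous.prodMk_right x)
  have hderiv (x : X) (d : ℝ) : HasDerivAt (fun d => ∫ t in c..d, ψ x t) (ψ x d) d :=
    (hψx x).integral_hasStrictDerivAt c d |>.hasDerivAt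
  have hpos (x : X) (d : ℝ) : 0 < ψ x d := (hδ x).trans_le (hδψ x d)
  have hmono (x : X) : StrictMono fun d => ∫ t in c..d, ψ x t :=
    strictMono_of_hasDerivAt_pos (hderiv x) (hpos x)
  have hsurj (x : X) : Function.Surjective fun d => ∫ t in c..d, ψ x t := by
    refine Continuous.surjective
      (continuous_iff_continuousAt.2 fun d => (hderiv x d).continuousAt) ?_ ?_
    · refine tendsto_atTop_mono' atTop (f₁ := fun d => δ x * (d - c)) ?_
        ((tendsto_id.atTop_add tendsto_const_nhds).const_mul_atTop (hδ x))
      filter_upwards [eventually_ge_atTop c] with d hd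
      calc δ x * (d - c) = ∫ _ in c..d, δ x := by simp [mul_comm]
        _ ≤ _ := intervalIntegral.integral_mono_on hd (by simp)
          ((hψx x).intervalIntegrable _ _) fun t _ => hδψ x t
    · refine tendsto_atBot_mono' atBot (f₁ := fun d => δ x * (d - c)) ?_
        ((tendsto_id.atBot_add tendsto_const_nhds).const_mul_atBot (hδ x))
      filter_upwards [eventually_le_atBot c] with d hd
      rw [intervalIntegral.integral_symm]
      have : ∫ _ in d..c, δ x ≤ ∫ t in d..c, ψ x t :=
        intervalIntegral.integral_mono_on hd (by simp)
          ((hψx x).intervalIntegrable _ _) fun t _ => hδψ x t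
      simp only [intervalIntegral.integral_const, smul_eq_mul] at this
      linarith
  let e (x : X) := (hmono x).orderIsoOfSurjective _ (hsurj x)
  have he (x : X) (d : ℝ) : e x d = ∫ t in c..d, ψ x t := rfl
  have hΦ : Continuous fun z : X × ℝ => ∫ t in a..z.2, φ z.1 t :=
    intervalIntegral.continuous_parametric_intervalIntegral_of_continuous
      (f := fun z : X × ℝ => φ z.1) (by fun_prop) continuous_snd
  have hΨ (d : ℝ) : Continuous fun z : X × ℝ => ∫ t in c..d, ψ z.1 t :=
    intervalIntegral.continuous_parametric_intervalIntegral_of_continuous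
      (f := fun z : X × ℝ => ψ z.1) (by fun_prop) continuous_const
  refine ⟨fun x y => (e x).symm (∫ t in a..y, φ x t), ?_, fun x y => ?_, fun x y d h => ?_⟩
  · rw [continuous_iff_lower_upperSemicontinuous, lowerSemicontinuous_iff_isOpen_preimage,
      upperSemicontinuous_iff_isOpen_preimage]
    refine ⟨fun d => ?_, fun d => ?_⟩
    · convert isOpen_lt (hΨ d) hΦ using 1
      ext z
      exact (e z.1).lt_symm_apply
    · convert isOpen_lt hΦ (hΨ d) using 1
      ext z
      exact (e z.1).symm_apply_lt
  · have h1 : HasDerivAt (e x).symm (ψ x ((e x).symm (∫ t in a..y, φ x t)))⁻¹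
        (∫ t in a..y, φ x t) :=
      HasDerivAt.of_local_left_inverse (e x).symm.continuous.continuousAt (hderiv x _)
        (hpos x _).ne' (.of_forall (e x).apply_symm_apply)
    have h2 : HasDerivAt (fun y => ∫ t in a..y, φ x t) (φ x y) y :=
      (hφx x).integral_hasStrictDerivAt a y |>.hasDerivAt
    rw [div_eq_inv_mul]
    exact h1.comp y h2
  · simp only [← h, ← he, OrderIso.symm_apply_apply]

/-- The Knothe map: a triangular map of squares carrying the density `F` to the density `G`. -/
theorem exists_triangular_transport {F G : ℝ × ℝ → ℝ} (hF : Continuous F) (hG : Continuous G)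
    (hFpos : ∀ z, 0 < F z) {δ : ℝ} (hδ : 0 < δ) (hδG : ∀ z, δ ≤ G z) {a R : ℝ} (ha : 0 < a)
    (hR : 0 < R)
    (hmass : ∫ x in -a..a, ∫ y in -a..a, F (x, y) = ∫ x in -R..R, ∫ y in -R..R, G (x, y)) :
    ∃ (T T' : ℝ → ℝ) (S S' : ℝ × ℝ → ℝ), Continuous T ∧ Continuous T' ∧ Continuous S ∧
      Continuous S' ∧ (∀ x, HasDerivAt T (T' x) x) ∧
      (∀ x y, HasDerivAt (fun y => S (x, y)) (S' (x, y)) y) ∧ (∀ x, 0 ≤ T' x) ∧ (∀ z, 0 ≤ S' z) ∧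
      T (-a) = -R ∧ T a = R ∧ (∀ x, S (x, -a) = -R) ∧ (∀ x, S (x, a) = R) ∧
      ∀ z, G (T z.1, S z) * (T' z.1 * S' z) = F z := by
  have hGpos (z : ℝ × ℝ) : 0 < G z := hδ.trans_le (hδG z)
  set F₁ : ℝ → ℝ := fun x => ∫ y in -a..a, F (x, y) with hF₁
  set G₁ : ℝ → ℝ := fun x => ∫ y in -R..R, G (x, y) with hG₁
  have hF₁c : Continuous F₁ :=
    intervalIntegral.continuous_parametric_intervalIntegral_of_continuous' (by fun_prop) _ _
  have hG₁c : Continuous G₁ :=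
    intervalIntegral.continuous_parametric_intervalIntegral_of_continuous' (by fun_prop) _ _
  have hF₁pos (x : ℝ) : 0 < F₁ x :=
    intervalIntegral.intervalIntegral_pos_of_pos
      (Continuous.intervalIntegrable (by fun_prop) _ _) (fun y => hFpos _) (by linarith)
  have hG₁δ (x : ℝ) : 2 * R * δ ≤ G₁ x := by
    calc 2 * R * δ = ∫ _ in -R..R, δ := by rw [intervalIntegral.integral_const, smul_eq_mul]; ring
      _ ≤ _ := intervalIntegral.integral_mono_on (by linarith) (by simp)
          (Continuous.intervalIntegrable (by fun_prop) _ _) fun t _ => hδG _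
  have hRδ : 0 < 2 * R * δ := by positivity
  have hG₁pos (x : ℝ) : 0 < G₁ x := hRδ.trans_le (hG₁δ x)
  obtain ⟨T, hTc, hTd, hT⟩ := exists_monotone_transport (X := Unit) (φ := fun _ => F₁)
    (ψ := fun _ => G₁) (δ := fun _ => 2 * R * δ) (by fun_prop) (by fun_prop) (fun _ => hRδ)
    (fun _ => hG₁δ) (-a) (-R)
  have hT₀c : Continuous (T ()) := hTc.comp (Continuous.prodMk_right ())
  obtain ⟨T', hT'⟩ : ∃ T' : ℝ → ℝ, ∀ x, T' x = F₁ x / G₁ (T () x) := ⟨_, fun _ => rfl⟩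
  have hT'c : Continuous T' := by
    rw [funext hT']
    exact hF₁c.div (hG₁c.comp hT₀c) fun x => (hG₁pos _).ne'
  have hT'pos (x : ℝ) : 0 < T' x := hT' x ▸ div_pos (hF₁pos _) (hG₁pos _)
  have hpos (x y : ℝ) : 0 < T' x * G (T () x, y) := mul_pos (hT'pos x) (hGpos _)
  obtain ⟨S, hSc, hSd, hS⟩ := exists_monotone_transport (X := ℝ) (φ := fun x y => F (x, y))
    (ψ := fun x y => T' x * G (T () x, y)) (δ := fun x => T' x * δ)
    (by fun_prop) (by unfold Function.uncurry; fun_prop) (fun x => mul_pos (hT'pos x) hδ)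
    (fun x y => mul_le_mul_of_nonneg_left (hδG _) (hT'pos x).le) (-a) (-R)
  have hSc' : Continuous fun z : ℝ × ℝ => S z.1 z.2 := hSc
  refine ⟨T (), T', fun z => S z.1 z.2, fun z => F z / (T' z.1 * G (T () z.1, S z.1 z.2)), hT₀c,
    hT'c, hSc, hF.div (by fun_prop) fun z => (hpos _ _).ne', fun x => hT' x ▸ hTd () x, hSd,
    fun x => (hT'pos x).le, fun z => (div_pos (hFpos z) (hpos _ _)).le, hT _ _ _ (by simp),
    hT _ _ _ hmass.symm, fun x => hS _ _ _ (by simp), fun x => hS _ _ _ ?_, fun z => ?_⟩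
  · rw [intervalIntegral.integral_const_mul, hT']
    exact div_mul_cancel₀ _ (hG₁pos _).ne'
  · have h1 := (hT'pos z.1).ne'
    have h2 := (hGpos (T () z.1, S z.1 z.2)).ne'
    field_simp

theorem intervalIntegral_comp_triangular {T T' : ℝ → ℝ} {S S' : ℝ × ℝ → ℝ}
    (hT : ∀ x, HasDerivAt T (T' x) x) (hT' : Continuous T') (hS'c : Continuous S')
    (hS : ∀ x y, HasDerivAt (fun y => S (x, y)) (S' (x, y)) y) {a R : ℝ}
    (hTa : T (-a) = -R) (hTb : T a = R) (hSa : ∀ x, S (x, -a) = -R) (hSb : ∀ x, S (x, a) = R)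
    {H : ℝ × ℝ → ℝ} (hH : Continuous H) :
    ∫ x in -a..a, ∫ y in -a..a, H (T x, S (x, y)) * (T' x * S' (x, y)) =
      ∫ x in -R..R, ∫ y in -R..R, H (x, y) := by
  have h1 (x : ℝ) : ∫ y in -a..a, H (T x, S (x, y)) * (T' x * S' (x, y)) =
      (∫ y in -R..R, H (T x, y)) * T' x := by
    rw [← hSa x, ← hSb x, ← intervalIntegral.integral_comp_mul_deriv (fun y _ => hS x y)
      (by fun_prop) (by fun_prop), ← intervalIntegral.integral_mul_const]
    simp only [Function.comp_apply]
    congr with y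
    ring
  simp_rw [h1]
  rw [← hTa, ← hTb, ← intervalIntegral.integral_comp_mul_deriv (fun y _ => hT y)
    (by fun_prop) (g := fun x => ∫ y in T (-a)..T a, H (x, y))
    (intervalIntegral.continuous_parametric_intervalIntegral_of_continuous' (by fun_prop) _ _)]
  rfl

/-- Integration by parts against a function that equals `c` on the boundary of a square. -/
theorem intervalIntegral_mul_div_eq {T T' : ℝ → ℝ} {S S' h h₁ h₂ : ℝ × ℝ → ℝ}
    (hT : ∀ x, HasDerivAt T (T' x) x) (hT' : Continuous T') (hSc : Continuous S)
    (hS'c : Continuous S') (hh : Continuous h) (hh₁ : Continuous h₁) (hh₂ : Continuous h₂)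
    (hd₁ : ∀ x y, HasDerivAt (fun x => h (x, y)) (h₁ (x, y)) x)
    (hd₂ : ∀ x y, HasDerivAt (fun y => h (x, y)) (h₂ (x, y)) y)
    (hS : ∀ x y, HasDerivAt (fun y => S (x, y)) (S' (x, y)) y) {a R c : ℝ}
    (hTa : T (-a) = -R) (hTb : T a = R) (hSa : ∀ x, S (x, -a) = -R) (hSb : ∀ x, S (x, a) = R)
    (hc₁ : ∀ y, h (-a, y) = c) (hc₂ : ∀ y, h (a, y) = c) (hc₃ : ∀ x, h (x, -a) = c)
    (hc₄ : ∀ x, h (x, a) = c) :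
    ∫ x in -a..a, ∫ y in -a..a, h (x, y) * (T' x + S' (x, y)) =
      8 * a * R * c - ∫ x in -a..a, ∫ y in -a..a, (h₁ (x, y) * T x + h₂ (x, y) * S (x, y)) := by
  have hTc : Continuous T := continuous_iff_continuousAt.2 fun x => (hT x).continuousAt
  have swap {k : ℝ × ℝ → ℝ} (hk : Continuous k) : ∫ x in -a..a, ∫ y in -a..a, k (x, y) =
      ∫ y in -a..a, ∫ x in -a..a, k (x, y) := by
    refine intervalIntegral_intervalIntegral_swap ?_
    exact (hk.continuousOn.integrableOn_compact (isCompact_uIcc.prod isCompact_uIcc)).mono_set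
      (prod_mono uIoc_subset_uIcc uIoc_subset_uIcc)
  have add {k l : ℝ × ℝ → ℝ} (hk : Continuous k) (hl : Continuous l) :
      ∫ x in -a..a, ∫ y in -a..a, (k (x, y) + l (x, y)) =
      (∫ x in -a..a, ∫ y in -a..a, k (x, y)) + ∫ x in -a..a, ∫ y in -a..a, l (x, y) := by
    have hc {k : ℝ × ℝ → ℝ} (hk : Continuous k) : Continuous fun x => ∫ y in -a..a, k (x, y) :=
      intervalIntegral.continuous_parametric_intervalIntegral_of_continuous' (by fun_prop) _ _
    rw [← intervalIntegral.integral_add ((hc hk).intervalIntegrable _ _)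
      ((hc hl).intervalIntegrable _ _)]
    congr with x
    exact intervalIntegral.integral_add (Continuous.intervalIntegrable (by fun_prop) _ _)
      (Continuous.intervalIntegrable (by fun_prop) _ _)
  have e1 (y : ℝ) : ∫ x in -a..a, h (x, y) * T' x = 2 * R * c - ∫ x in -a..a, h₁ (x, y) * T x := by
    rw [intervalIntegral.integral_mul_deriv_eq_deriv_mul (fun x _ => hd₁ x y) (fun x _ => hT x)
      (Continuous.intervalIntegrable (by fun_prop) _ _)
      (Continuous.intervalIntegrable (by fun_prop) _ _), hc₁, hc₂, hTa, hTb]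
    ring
  have e2 (x : ℝ) : ∫ y in -a..a, h (x, y) * S' (x, y) =
      2 * R * c - ∫ y in -a..a, h₂ (x, y) * S (x, y) := by
    rw [intervalIntegral.integral_mul_deriv_eq_deriv_mul (fun y _ => hd₂ x y) (fun y _ => hS x y)
      (Continuous.intervalIntegrable (by fun_prop) _ _)
      (Continuous.intervalIntegrable (by fun_prop) _ _), hc₃, hc₄, hSa, hSb]
    ring
  have e3 {k : ℝ × ℝ → ℝ} (hk : Continuous k) :
      ∫ x in -a..a, (2 * R * c - ∫ y in -a..a, k (x, y)) =
        4 * a * R * c - ∫ x in -a..a, ∫ y in -a..a, k (x, y) := by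
    rw [intervalIntegral.integral_sub (by simp) (Continuous.intervalIntegrable
      (intervalIntegral.continuous_parametric_intervalIntegral_of_continuous' (by fun_prop) _ _)
      _ _)]
    simp
    ring
  simp_rw [mul_add]
  rw [add (k := fun z => h z * T' z.1) (l := fun z => h z * S' z) (by fun_prop) (by fun_prop),
    swap (k := fun z => h z * T' z.1) (by fun_prop),
    add (k := fun z => h₁ z * T z.1) (l := fun z => h₂ z * S z) (by fun_prop) (by fun_prop)]
  simp_rw [e1, e2]
  rw [e3 (k := fun z => h₂ z * S z) (by fun_prop),
    e3 (k := fun z => h₁ (z.2, z.1) * T z.2) (by fun_prop),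
    swap (k := fun z => h₁ z * T z.1) (by fun_prop)]
  ring

theorem intervalIntegral_intervalIntegral_eq_setIntegral {k : ℝ × ℝ → ℝ} (hk : Continuous k)
    {a : ℝ} (ha : 0 ≤ a) :
    ∫ x in -a..a, ∫ y in -a..a, k (x, y) = ∫ z in Icc (-a) a ×ˢ Icc (-a) a, k z := by
  have := setIntegral_prod (μ := volume) (ν := volume) k (s := Icc (-a) a) (t := Icc (-a) a)
    (hk.continuousOn.integrableOn_compact (isCompact_Icc.prod isCompact_Icc))
  simp_rw [intervalIntegral.integral_of_le (neg_le_self ha), ← integral_Icc_eq_integral_Ioc]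
  exact this.symm

/-- The mass transport inequality for the pair of densities `h ^ 2` and `G` on two squares. -/
theorem exists_transport_inequality {h h₁ h₂ G : ℝ × ℝ → ℝ} (hh : Continuous h)
    (hh₁ : Continuous h₁) (hh₂ : Continuous h₂)
    (hd₁ : ∀ x y, HasDerivAt (fun x => h (x, y)) (h₁ (x, y)) x)
    (hd₂ : ∀ x y, HasDerivAt (fun y => h (x, y)) (h₂ (x, y)) y) (hpos : ∀ z, 0 < h z)
    (hG : Continuous G) {δ : ℝ} (hδ : 0 < δ) (hδG : ∀ z, δ ≤ G z) {a R c : ℝ} (ha : 0 < a)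
    (hR : 0 < R) (hc₁ : ∀ y, h (-a, y) = c) (hc₂ : ∀ y, h (a, y) = c)
    (hc₃ : ∀ x, h (x, -a) = c) (hc₄ : ∀ x, h (x, a) = c)
    (hmass : ∫ z in Icc (-a) a ×ˢ Icc (-a) a, h z ^ 2 = ∫ z in Icc (-R) R ×ˢ Icc (-R) R, G z) :
    ∃ τ σ : ℝ × ℝ → ℝ, Continuous τ ∧ Continuous σ ∧
      ∫ z in Icc (-R) R ×ˢ Icc (-R) R, √(G z) ≤
        4 * a * R * c - (∫ z in Icc (-a) a ×ˢ Icc (-a) a, (h₁ z * τ z + h₂ z * σ z)) / 2 ∧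
      ∀ H : ℝ × ℝ → ℝ, Continuous H →
        ∫ z in Icc (-a) a ×ˢ Icc (-a) a, h z ^ 2 * H (τ z, σ z) =
          ∫ z in Icc (-R) R ×ˢ Icc (-R) R, G z * H z := by
  obtain ⟨T, T', S, S', hTc, hT'c, hSc, hS'c, hT, hS, hT'0, hS'0, hTa, hTb, hSa, hSb, hMA⟩ :=
    exists_triangular_transport (F := fun z => h z ^ 2) (by fun_prop) hG
      (fun z => pow_pos (hpos z) 2) hδ hδG ha hR (by
        rw [intervalIntegral_intervalIntegral_eq_setIntegral (k := fun z => h z ^ 2) (by fun_prop)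
            ha.le, hmass,
          intervalIntegral_intervalIntegral_eq_setIntegral hG hR.le])
  refine ⟨fun z => T z.1, S, by fun_prop, hSc, ?_, fun H hH => ?_⟩
  · rw [← intervalIntegral_intervalIntegral_eq_setIntegral (by fun_prop) hR.le,
      ← intervalIntegral_comp_triangular hT hT'c hS'c hS hTa hTb hSa hSb
        (H := fun z => √(G z)) (by fun_prop),
      intervalIntegral_intervalIntegral_eq_setIntegral
        (k := fun z => √(G (T z.1, S z)) * (T' z.1 * S' z)) (by fun_prop) ha.le]
    have key := intervalIntegral_mul_div_eq hT hT'c hSc hS'c hh hh₁ hh₂ hd₁ hd₂ hS hTa hTb hSa hSb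
      hc₁ hc₂ hc₃ hc₄
    rw [intervalIntegral_intervalIntegral_eq_setIntegral
        (k := fun z => h z * (T' z.1 + S' z)) (by fun_prop) ha.le,
      intervalIntegral_intervalIntegral_eq_setIntegral
        (k := fun z => h₁ z * T z.1 + h₂ z * S z) (by fun_prop) ha.le] at key
    have hle : ∫ z in Icc (-a) a ×ˢ Icc (-a) a, √(G (T z.1, S z)) * (T' z.1 * S' z) ≤
        ∫ z in Icc (-a) a ×ˢ Icc (-a) a, h z * (T' z.1 + S' z) / 2 := by
      refine setIntegral_mono
        (Continuous.continuousOn (by fun_prop) |>.integrableOn_compact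
          (isCompact_Icc.prod isCompact_Icc))
        (Continuous.continuousOn (by fun_prop) |>.integrableOn_compact
          (isCompact_Icc.prod isCompact_Icc)) fun z => ?_
      have hD := mul_nonneg (hT'0 z.1) (hS'0 z)
      have h1 : h z = √(G (T z.1, S z)) * √(T' z.1 * S' z) := by
        rw [← Real.sqrt_mul' _ hD, hMA z, Real.sqrt_sq (hpos z).le]
      have h2 : √(T' z.1 * S' z) ≤ (T' z.1 + S' z) / 2 :=
        Real.sqrt_le_iff.2 ⟨by linarith [hT'0 z.1, hS'0 z],
          by nlinarith [sq_nonneg (T' z.1 - S' z)]⟩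
      calc √(G (T z.1, S z)) * (T' z.1 * S' z) = h z * √(T' z.1 * S' z) := by
            rw [h1, mul_assoc, Real.mul_self_sqrt hD]
        _ ≤ h z * ((T' z.1 + S' z) / 2) := mul_le_mul_of_nonneg_left h2 (hpos z).le
        _ = _ := by ring
    rw [integral_div, key] at hle
    linarith
  · rw [← intervalIntegral_intervalIntegral_eq_setIntegral (k := fun z => G z * H z)
        (by fun_prop) hR.le,
      ← intervalIntegral_comp_triangular hT hT'c hS'c hS hTa hTb hSa hSb
        (H := fun z => G z * H z) (by fun_prop),
      intervalIntegral_intervalIntegral_eq_setIntegral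
        (k := fun z => G (T z.1, S z) * H (T z.1, S z) * (T' z.1 * S' z)) (by fun_prop) ha.le]
    congr with z
    rw [← hMA z]
    ring

/-- The mass transport inequality with a density on the target that need only be positive. -/
theorem exists_transport_inequality_of_pos {h h₁ h₂ G : ℝ × ℝ → ℝ} (hh : Continuous h)
    (hh₁ : Continuous h₁) (hh₂ : Continuous h₂)
    (hd₁ : ∀ x y, HasDerivAt (fun x => h (x, y)) (h₁ (x, y)) x)
    (hd₂ : ∀ x y, HasDerivAt (fun y => h (x, y)) (h₂ (x, y)) y) (hpos : ∀ z, 0 < h z)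
    (hG : Continuous G) (hGpos : ∀ z, 0 < G z) {a R c : ℝ} (ha : 0 < a)
    (hR : 0 < R) (hc₁ : ∀ y, h (-a, y) = c) (hc₂ : ∀ y, h (a, y) = c)
    (hc₃ : ∀ x, h (x, -a) = c) (hc₄ : ∀ x, h (x, a) = c)
    (hmass : ∫ z in Icc (-a) a ×ˢ Icc (-a) a, h z ^ 2 = ∫ z in Icc (-R) R ×ˢ Icc (-R) R, G z) :
    ∃ τ σ : ℝ × ℝ → ℝ, Continuous τ ∧ Continuous σ ∧
      ∫ z in Icc (-R) R ×ˢ Icc (-R) R, √(G z) ≤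
        4 * a * R * c - (∫ z in Icc (-a) a ×ˢ Icc (-a) a, (h₁ z * τ z + h₂ z * σ z)) / 2 ∧
      ∀ H : ℝ × ℝ → ℝ, Continuous H →
        ∫ z in Icc (-a) a ×ˢ Icc (-a) a, h z ^ 2 * H (τ z, σ z) =
          ∫ z in Icc (-R) R ×ˢ Icc (-R) R, G z * H z := by
  have hRR : -R ≤ R := by linarith
  have hB : MeasurableSet (Icc (-R) R ×ˢ Icc (-R) R) := measurableSet_Icc.prod measurableSet_Icc
  let C : ℝ × ℝ → ℝ × ℝ := fun z => (projIcc (-R) R hRR z.1, projIcc (-R) R hRR z.2)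
  have hCc : Continuous C := by
    have : Continuous (projIcc (-R) R hRR) := continuous_projIcc
    fun_prop
  have hCeq (z) (hz : z ∈ Icc (-R) R ×ˢ Icc (-R) R) : C z = z := by
    simp [C, projIcc_of_mem hRR hz.1, projIcc_of_mem hRR hz.2]
  have hCmem (z) : C z ∈ Icc (-R) R ×ˢ Icc (-R) R :=
    ⟨(projIcc (-R) R hRR z.1).2, (projIcc (-R) R hRR z.2).2⟩
  obtain ⟨z₀, -, hz₀⟩ := (isCompact_Icc.prod isCompact_Icc : IsCompact
    (Icc (-R) R ×ˢ Icc (-R) R)).exists_isMinOn ⟨_, hCmem 0⟩ hG.continuousOn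
  have hcube (Φ : ℝ → ℝ × ℝ → ℝ) : ∫ z in Icc (-R) R ×ˢ Icc (-R) R, Φ (G (C z)) z =
      ∫ z in Icc (-R) R ×ˢ Icc (-R) R, Φ (G z) z :=
    setIntegral_congr_fun hB fun z hz => by simp only [hCeq z hz]
  obtain ⟨τ, σ, hτ, hσ, h1, h2⟩ := exists_transport_inequality hh hh₁ hh₂ hd₁ hd₂ hpos
    (hG.comp hCc) (hGpos z₀) (fun z => hz₀ (hCmem z)) ha hR hc₁ hc₂ hc₃ hc₄
    (hmass.trans (hcube fun t _ => t).symm)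
  refine ⟨τ, σ, hτ, hσ, ?_, fun H hH => ?_⟩
  · rwa [← hcube fun t _ => √t]
  · rw [h2 H hH, ← hcube fun t z => t * H z]
    rfl

theorem integral_rpow_le_rpow_integral_mul_measureReal {α : Type*} {m : MeasurableSpace α}
    {μ : Measure α} [IsFiniteMeasure μ] {w : α → ℝ} (hw : AEStronglyMeasurable w μ)
    (hw0 : ∀ x, 0 ≤ w x) {C : ℝ} (hwC : ∀ᵐ x ∂μ, w x ≤ C) {r q : ℝ} (hr : 0 < r) (hrq : r < q) :
    ∫ x, w x ^ r ∂μ ≤ (∫ x, w x ^ q ∂μ) ^ (r / q) * μ.real univ ^ (1 - r / q) := by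
  have hq : 0 < q := hr.trans hrq
  have hconj : (q / r).HolderConjugate (1 - r / q)⁻¹ := by
    rw [Real.holderConjugate_iff]
    refine ⟨(one_lt_div hr).2 hrq, ?_⟩
    rw [inv_inv, inv_div]
    ring
  have key := integral_mul_le_Lp_mul_Lq_of_nonneg (μ := μ) hconj (f := fun x => w x ^ r)
    (g := fun _ => 1) (.of_forall fun x => rpow_nonneg (hw0 x) _) (.of_forall fun _ => zero_le_one)
    (MemLp.of_bound (hw.aemeasurable.pow_const r).aestronglyMeasurable (C ^ r) (by
      filter_upwards [hwC] with x hx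
      rw [Real.norm_of_nonneg (rpow_nonneg (hw0 x) _)]
      exact rpow_le_rpow (hw0 x) hx hr.le)) (memLp_const 1)
  simp only [mul_one, one_rpow, integral_const, smul_eq_mul, one_div, inv_inv, inv_div,
    ← rpow_mul (hw0 _), mul_div_cancel₀ _ hr.ne'] at key
  exact key

theorem hasDerivAt_sqrt_abs_rpow_add {v : ℝ → ℝ} {v' x q ε : ℝ} (hv : HasDerivAt v v' x)
    (hq : 1 < q) (hε : 0 < ε) :
    HasDerivAt (fun x => √(|v x| ^ q + ε))
      (q * |v x| ^ (q - 2) * v x * v' / (2 * √(|v x| ^ q + ε))) x :=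
  (((hasDerivAt_abs_rpow (v x) hq).comp x hv).add_const ε).sqrt
    (add_pos_of_nonneg_of_pos (rpow_nonneg (abs_nonneg (v x)) q) hε).ne'

theorem abs_add_mul_le_sqrt_mul_sqrt (a b c d : ℝ) :
    |a * c + b * d| ≤ √(a ^ 2 + b ^ 2) * √(c ^ 2 + d ^ 2) := by
  rw [← Real.sqrt_mul (by positivity)]
  exact Real.abs_le_sqrt (by nlinarith [sq_nonneg (a * d - b * c)])

theorem abs_rpow_sub_two_mul_self_div_le {v q ε : ℝ} (hq : 2 < q) (hε : 0 < ε) :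
    |v| ^ (q - 2) * |v| / √(|v| ^ q + ε) ≤ |v| ^ (q / 2 - 1) := by
  have h0 : 0 < √(|v| ^ q + ε) := Real.sqrt_pos.2 (by positivity)
  rw [div_le_iff₀ h0]
  have h1 : |v| ^ (q - 2) * |v| = |v| ^ (q / 2 - 1) * |v| ^ (q / 2) := by
    rw [← rpow_add_of_nonneg (abs_nonneg v) (by linarith) (by linarith)]
    nth_rewrite 2 [← rpow_one |v|]
    rw [← rpow_add_of_nonneg (abs_nonneg v) (by linarith) (by norm_num)]
    ring_nf
  rw [h1]
  gcongr
  refine Real.le_sqrt_of_sq_le ?_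
  rw [← rpow_natCast, ← rpow_mul (abs_nonneg v)]
  simp only [Nat.cast_ofNat, div_mul_cancel₀ q two_ne_zero]
  linarith

/-- Hölder's inequality for the integral produced by the transport argument. -/
theorem setIntegral_rpow_mul_mul_le {X : Type*} [TopologicalSpace X] [MeasurableSpace X]
    [BorelSpace X] [SecondCountableTopology X] {μ : Measure X} {Ω K : Set X} (hK : IsCompact K)
    (hΩK : Ω ⊆ K) (hΩ : MeasurableSet Ω) (hKμ : μ K ≠ ⊤)
    {u k ρ : X → ℝ} (hu : Continuous u) (hk : Continuous k) (hρ : Continuous ρ)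
    (hk0 : ∀ z, 0 ≤ k z) (hρ0 : ∀ z, 0 ≤ ρ z) {q : ℝ} (hq : 2 < q) :
    ∫ z in Ω, |u z| ^ (q / 2 - 1) * ρ z * k z ∂μ ≤
      √(∫ z in Ω, k z ^ 2 ∂μ) * μ.real Ω ^ (1 / q) *
        (∫ z in Ω, |u z| ^ q * ρ z ^ (2 * q / (q - 2)) ∂μ) ^ (1 / 2 - 1 / q) := by
  have hμΩ : μ Ω < ⊤ := (measure_mono hΩK).trans_lt hKμ.lt_top
  have : IsFiniteMeasure (μ.restrict Ω) := ⟨by simpa using hμΩ⟩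
  have hq2 : 0 < q - 2 := by linarith
  have hc : Continuous fun z => |u z| ^ (q / 2 - 1) * ρ z :=
    (hu.abs.rpow_const fun _ => Or.inr (by linarith)).mul hρ
  have hw0 (z) : 0 ≤ |u z| ^ (q / 2 - 1) * ρ z := mul_nonneg (by positivity) (hρ0 z)
  have bdd {g : X → ℝ} (hg : Continuous g) : ∃ C, ∀ᵐ z ∂μ.restrict Ω, ‖g z‖ ≤ C := by
    obtain ⟨C, hC⟩ := hK.exists_bound_of_continuousOn hg.continuousOn
    exact ⟨C, (ae_restrict_iff' hΩ).2 (.of_forall fun z hz => hC z (hΩK hz))⟩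
  obtain ⟨C, hC⟩ := bdd hc
  obtain ⟨D, hD⟩ := bdd hk
  have h1 := integral_mul_le_Lp_mul_Lq_of_nonneg (μ := μ.restrict Ω) HolderConjugate.two_two
    (f := fun z => |u z| ^ (q / 2 - 1) * ρ z) (g := k) (.of_forall hw0) (.of_forall hk0)
    (.of_bound hc.aestronglyMeasurable C hC) (.of_bound hk.aestronglyMeasurable D hD)
  have h2 := integral_rpow_le_rpow_integral_mul_measureReal (μ := μ.restrict Ω)
    hc.aestronglyMeasurable hw0 (hC.mono fun z hz => (le_abs_self _).trans hz) (r := 2)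
    (q := 2 * q / (q - 2)) two_pos (by rw [lt_div_iff₀ hq2]; linarith)
  have h3 (z) : (|u z| ^ (q / 2 - 1) * ρ z) ^ (2 * q / (q - 2)) =
      |u z| ^ q * ρ z ^ (2 * q / (q - 2)) := by
    rw [mul_rpow (by positivity) (hρ0 z), ← rpow_mul (abs_nonneg _)]
    congr 2
    field_simp
  have e1 : 2 / (2 * q / (q - 2)) = 1 - 2 / q := by field_simp
  simp_rw [h3, e1] at h2
  set J := ∫ z in Ω, |u z| ^ q * ρ z ^ (2 * q / (q - 2)) ∂μ
  have hJ : 0 ≤ J := integral_nonneg fun z => mul_nonneg (by positivity)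
    (rpow_nonneg (hρ0 z) _)
  refine h1.trans ?_
  simp only [measureReal_restrict_apply_univ, rpow_two] at h2 ⊢
  rw [mul_comm, ← Real.sqrt_eq_rpow, mul_assoc]
  gcongr
  refine (rpow_le_rpow (integral_nonneg fun z => sq_nonneg _) h2 (by norm_num)).trans_eq ?_
  rw [mul_rpow (by positivity) (by positivity), ← rpow_mul hJ, ← rpow_mul measureReal_nonneg,
    mul_comm]
  ring_nf

/-- The mass transport argument for the density `|u| ^ q + ε`. -/
theorem transport_sobolev_of_pos {u u₁ u₂ G : ℝ × ℝ → ℝ} (hu : Continuous u) (hu₁ : Continuous u₁)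
    (hu₂ : Continuous u₂) (hd₁ : ∀ x y, HasDerivAt (fun x => u (x, y)) (u₁ (x, y)) x)
    (hd₂ : ∀ x y, HasDerivAt (fun y => u (x, y)) (u₂ (x, y)) y) {q : ℝ} (hq : 2 < q)
    {Ω : Set (ℝ × ℝ)} (hΩ : MeasurableSet Ω) (huΩ : ∀ z, z ∉ Ω → u z = 0) {a : ℝ} (ha : 0 < a)
    (hΩa : Ω ⊆ Ioo (-a) a ×ˢ Ioo (-a) a) (hG : Continuous G) (hGpos : ∀ z, 0 < G z) {R : ℝ}
    (hR : 0 < R) {ε : ℝ} (hε : 0 < ε)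
    (hmass : ∫ z in Icc (-a) a ×ˢ Icc (-a) a, (|u z| ^ q + ε) =
      ∫ z in Icc (-R) R ×ˢ Icc (-R) R, G z) :
    ∫ z in Icc (-R) R ×ˢ Icc (-R) R, √(G z) ≤ 4 * a * R * √ε +
      q / 4 * (√(∫ z in Ω, (u₁ z ^ 2 + u₂ z ^ 2)) * volume.real Ω ^ (1 / q) *
        (∫ z in Icc (-R) R ×ˢ Icc (-R) R, G z * √(z.1 ^ 2 + z.2 ^ 2) ^ (2 * q / (q - 2))) ^
          (1 / 2 - 1 / q)) := by
  have hq2 : 0 < q - 2 := by linarith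
  have hβ : 0 < 2 * q / (q - 2) := by positivity
  have hpos (z) : 0 < |u z| ^ q + ε := by positivity
  have hΩQ : Ω ⊆ Icc (-a) a ×ˢ Icc (-a) a := hΩa.trans (prod_mono Ioo_subset_Icc_self
    Ioo_subset_Icc_self)
  have hQ : IsCompact (Icc (-a) a ×ˢ Icc (-a) a) := isCompact_Icc.prod isCompact_Icc
  have hQm : MeasurableSet (Icc (-a) a ×ˢ Icc (-a) a) := measurableSet_Icc.prod measurableSet_Icc
  have hpc {v : ℝ × ℝ → ℝ} (hv : Continuous v) {t : ℝ} (ht : 0 < t) :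
      Continuous fun z => |v z| ^ t := hv.abs.rpow_const fun _ => Or.inr ht.le
  have hc : Continuous fun z => √(|u z| ^ q + ε) := by
    have := hpc hu (t := q) (by linarith)
    fun_prop
  have hdc {v : ℝ × ℝ → ℝ} (hv : Continuous v) : Continuous fun z =>
      q * |u z| ^ (q - 2) * u z * v z / (2 * √(|u z| ^ q + ε)) :=
    (((continuous_const.mul (hpc hu hq2)).mul hu).mul hv).div (by fun_prop) fun z =>
      (mul_pos two_pos (Real.sqrt_pos.2 (hpos z))).ne'
  have hbdry (z : ℝ × ℝ) (hz : z ∉ Ioo (-a) a ×ˢ Ioo (-a) a) : √(|u z| ^ q + ε) = √ε := by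
    rw [huΩ z fun h => hz (hΩa h), abs_zero, zero_rpow (by linarith), zero_add]
  obtain ⟨τ, σ, hτ, hσ, h1, h2⟩ := exists_transport_inequality_of_pos hc (hdc hu₁) (hdc hu₂)
    (fun x y => hasDerivAt_sqrt_abs_rpow_add (hd₁ x y) (by linarith) hε)
    (fun x y => hasDerivAt_sqrt_abs_rpow_add (hd₂ x y) (by linarith) hε)
    (fun z => Real.sqrt_pos.2 (hpos z)) hG hGpos ha hR (c := √ε)
    (fun y => hbdry _ (by simp)) (fun y => hbdry _ (by simp)) (fun x => hbdry _ (by simp))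
    (fun x => hbdry _ (by simp)) (by simpa only [Real.sq_sqrt (hpos _).le] using hmass)
  simp only [Real.sq_sqrt (hpos _).le] at h2
  have hβc : Continuous fun z : ℝ × ℝ => √(z.1 ^ 2 + z.2 ^ 2) ^ (2 * q / (q - 2)) :=
    (Continuous.sqrt (by fun_prop)).rpow_const fun _ => Or.inr hβ.le
  have h3 := h2 _ hβc
  set ρ : ℝ × ℝ → ℝ := fun z => √(τ z ^ 2 + σ z ^ 2) with hρ
  set k : ℝ × ℝ → ℝ := fun z => √(u₁ z ^ 2 + u₂ z ^ 2) with hk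
  have hρc : Continuous ρ := by fun_prop
  have hkc : Continuous k := by fun_prop
  have hρβ : Continuous fun z => ρ z ^ (2 * q / (q - 2)) := hρc.rpow_const fun _ => Or.inr hβ.le
  have hwc : Continuous fun z => |u z| ^ (q / 2 - 1) * ρ z * k z :=
    ((hpc hu (by linarith)).mul hρc).mul hkc
  have h4 : -∫ z in Icc (-a) a ×ˢ Icc (-a) a,
      (q * |u z| ^ (q - 2) * u z * u₁ z / (2 * √(|u z| ^ q + ε)) * τ z +
        q * |u z| ^ (q - 2) * u z * u₂ z / (2 * √(|u z| ^ q + ε)) * σ z) ≤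
      ∫ z in Icc (-a) a ×ˢ Icc (-a) a, q / 2 * (|u z| ^ (q / 2 - 1) * ρ z * k z) := by
    rw [← integral_neg]
    refine setIntegral_mono (Continuous.continuousOn (((hdc hu₁).mul hτ).add
      ((hdc hu₂).mul hσ)).neg |>.integrableOn_compact hQ)
      ((hwc.const_mul _).continuousOn.integrableOn_compact hQ) fun z => ?_
    have hs := Real.sqrt_pos.2 (hpos z)
    have e1 := abs_add_mul_le_sqrt_mul_sqrt (u₁ z) (u₂ z) (τ z) (σ z)
    have e2 := abs_rpow_sub_two_mul_self_div_le (v := u z) hq hε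
    calc _ ≤ |q * |u z| ^ (q - 2) * u z * u₁ z / (2 * √(|u z| ^ q + ε)) * τ z +
          q * |u z| ^ (q - 2) * u z * u₂ z / (2 * √(|u z| ^ q + ε)) * σ z| := neg_le_abs _
      _ = |q / 2 * (|u z| ^ (q - 2) * u z / √(|u z| ^ q + ε)) * (u₁ z * τ z + u₂ z * σ z)| := by
          congr 1
          field_simp
      _ = q / 2 * (|u z| ^ (q - 2) * |u z| / √(|u z| ^ q + ε)) *
          |u₁ z * τ z + u₂ z * σ z| := by
          rw [abs_mul, abs_mul, abs_of_pos (by linarith : 0 < q / 2), abs_div, abs_mul,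
            abs_of_pos hs, abs_of_nonneg (rpow_nonneg (abs_nonneg (u z)) _)]
      _ ≤ q / 2 * |u z| ^ (q / 2 - 1) * (k z * ρ z) := by gcongr
      _ = _ := by ring
  have h5 : ∫ z in Icc (-a) a ×ˢ Icc (-a) a, |u z| ^ (q / 2 - 1) * ρ z * k z =
      ∫ z in Ω, |u z| ^ (q / 2 - 1) * ρ z * k z := by
    refine setIntegral_eq_of_subset_of_forall_sdiff_eq_zero hQm hΩQ fun z hz => ?_
    rw [huΩ z hz.2, abs_zero, zero_rpow (by linarith), zero_mul, zero_mul]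
  have h6 := setIntegral_rpow_mul_mul_le (μ := volume) hQ hΩQ hΩ hQ.measure_lt_top.ne hu hkc hρc
    (fun z => Real.sqrt_nonneg _) (fun z => Real.sqrt_nonneg _) hq
  have h7 : ∫ z in Ω, |u z| ^ q * ρ z ^ (2 * q / (q - 2)) ≤
      ∫ z in Icc (-R) R ×ˢ Icc (-R) R, G z * √(z.1 ^ 2 + z.2 ^ 2) ^ (2 * q / (q - 2)) := by
    have hi : IntegrableOn (fun z => (|u z| ^ q + ε) * ρ z ^ (2 * q / (q - 2)))
        (Icc (-a) a ×ˢ Icc (-a) a) :=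
      ((hpc hu (by linarith)).add_const ε |>.mul hρβ).continuousOn.integrableOn_compact hQ
    rw [← h3]
    refine (integral_mono_of_nonneg (.of_forall fun z => by positivity) (hi.mono_set hΩQ)
      (.of_forall fun z => ?_)).trans (setIntegral_mono_set hi
        (.of_forall fun z => mul_nonneg (hpos z).le (by positivity)) hΩQ.eventuallyLE)
    exact mul_le_mul_of_nonneg_right (by linarith) (by positivity)
  have h8 (z) : k z ^ 2 = u₁ z ^ 2 + u₂ z ^ 2 := Real.sq_sqrt (by positivity)
  have h9 : (∫ z in Ω, |u z| ^ q * ρ z ^ (2 * q / (q - 2))) ^ (1 / 2 - 1 / q) ≤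
      (∫ z in Icc (-R) R ×ˢ Icc (-R) R, G z * √(z.1 ^ 2 + z.2 ^ 2) ^ (2 * q / (q - 2))) ^
        (1 / 2 - 1 / q) :=
    rpow_le_rpow (integral_nonneg fun z => by positivity) h7
      (sub_nonneg.2 (one_div_le_one_div_of_le two_pos hq.le))
  simp only [h8] at h6
  have h10 := h6.trans (mul_le_mul_of_nonneg_left h9 (by positivity))
  rw [integral_const_mul, h5] at h4
  have h11 := mul_le_mul_of_nonneg_left h10 (by linarith : 0 ≤ q / 4)
  linarith

theorem transport_sobolev_square {u u₁ u₂ G : ℝ × ℝ → ℝ} (hu : Continuous u) (hu₁ : Continuous u₁)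
    (hu₂ : Continuous u₂) (hd₁ : ∀ x y, HasDerivAt (fun x => u (x, y)) (u₁ (x, y)) x)
    (hd₂ : ∀ x y, HasDerivAt (fun y => u (x, y)) (u₂ (x, y)) y) {q : ℝ} (hq : 2 < q)
    {Ω : Set (ℝ × ℝ)} (hΩ : MeasurableSet Ω) (huΩ : ∀ z, z ∉ Ω → u z = 0) {a : ℝ} (ha : 0 < a)
    (hΩa : Ω ⊆ Ioo (-a) a ×ˢ Ioo (-a) a) (hG : Continuous G) (hGpos : ∀ z, 0 < G z) {R : ℝ}
    (hR : 0 < R) :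
    √((∫ z in Ω, |u z| ^ q) / ∫ z in Icc (-R) R ×ˢ Icc (-R) R, G z) *
        ∫ z in Icc (-R) R ×ˢ Icc (-R) R, √(G z) ≤
      q / 4 * (√(∫ z in Ω, (u₁ z ^ 2 + u₂ z ^ 2)) * volume.real Ω ^ (1 / q) *
        ((∫ z in Ω, |u z| ^ q) / (∫ z in Icc (-R) R ×ˢ Icc (-R) R, G z) *
          ∫ z in Icc (-R) R ×ˢ Icc (-R) R, G z * √(z.1 ^ 2 + z.2 ^ 2) ^ (2 * q / (q - 2))) ^
          (1 / 2 - 1 / q)) := by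
  have hγ : 0 ≤ 1 / 2 - 1 / q := sub_nonneg.2 (one_div_le_one_div_of_le two_pos hq.le)
  set M := ∫ z in Ω, |u z| ^ q
  set m := ∫ z in Icc (-R) R ×ˢ Icc (-R) R, G z
  set J := ∫ z in Icc (-R) R ×ˢ Icc (-R) R, G z * √(z.1 ^ 2 + z.2 ^ 2) ^ (2 * q / (q - 2))
  set V := volume.real (Icc (-a) a ×ˢ Icc (-a) a)
  have hM : 0 ≤ M := integral_nonneg fun z => by positivity
  have hBc : IsCompact (Icc (-R) R ×ˢ Icc (-R) R) := isCompact_Icc.prod isCompact_Icc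
  have hQc : IsCompact (Icc (-a) a ×ˢ Icc (-a) a) := isCompact_Icc.prod isCompact_Icc
  have hbox {b : ℝ} (hb : 0 < b) : 0 < volume (Icc (-b) b ×ˢ Icc (-b) b) := by
    have : 0 < b + b := by positivity
    rw [Measure.volume_eq_prod, Measure.prod_prod]
    simp [this]
  have hm : 0 < m := (setIntegral_pos_iff_support_of_nonneg_ae (.of_forall fun z => (hGpos z).le)
    (hG.continuousOn.integrableOn_compact hBc)).2 (by
      rw [Function.support_eq_univ fun z => (hGpos z).ne', univ_inter]
      exact hbox hR)
  have hV : 0 < V := ENNReal.toReal_pos (hbox ha).ne' hQc.measure_lt_top.ne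
  have hMQ : ∫ z in Icc (-a) a ×ˢ Icc (-a) a, |u z| ^ q = M := by
    refine setIntegral_eq_of_subset_of_forall_sdiff_eq_zero
      (measurableSet_Icc.prod measurableSet_Icc)
      (hΩa.trans (prod_mono Ioo_subset_Icc_self Ioo_subset_Icc_self)) fun z hz => ?_
    rw [huΩ z hz.2, abs_zero, zero_rpow (by linarith)]
  have hmass (ε : ℝ) : ∫ z in Icc (-a) a ×ˢ Icc (-a) a, (|u z| ^ q + ε) = M + ε * V := by
    have hi : IntegrableOn (fun z => |u z| ^ q) (Icc (-a) a ×ˢ Icc (-a) a) :=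
      (hu.abs.rpow_const fun _ => Or.inr (by linarith)).continuousOn.integrableOn_compact hQc
    have hi' : IntegrableOn (fun _ : ℝ × ℝ => ε) (Icc (-a) a ×ˢ Icc (-a) a) :=
      continuous_const.continuousOn.integrableOn_compact hQc
    rw [integral_add hi hi', hMQ, setIntegral_const, smul_eq_mul, mul_comm]
  have main (ε : ℝ) (hε : 0 < ε) : √((M + ε * V) / m) * ∫ z in Icc (-R) R ×ˢ Icc (-R) R, √(G z) ≤
      4 * a * R * √ε + q / 4 * (√(∫ z in Ω, (u₁ z ^ 2 + u₂ z ^ 2)) * volume.real Ω ^ (1 / q) *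
        ((M + ε * V) / m * J) ^ (1 / 2 - 1 / q)) := by
    have hl : 0 < (M + ε * V) / m := by positivity
    have := transport_sobolev_of_pos hu hu₁ hu₂ hd₁ hd₂ hq hΩ huΩ ha hΩa
      (G := fun z => (M + ε * V) / m * G z) (by fun_prop) (fun z => mul_pos hl (hGpos z)) hR hε (by
        rw [hmass, integral_const_mul, div_mul_cancel₀ _ hm.ne'])
    simpa only [Real.sqrt_mul hl.le, integral_const_mul, mul_assoc] using this
  have c1 : Continuous fun ε : ℝ =>
      √((M + ε * V) / m) * ∫ z in Icc (-R) R ×ˢ Icc (-R) R, √(G z) := by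
    fun_prop
  have c2 : Continuous fun ε : ℝ => ((M + ε * V) / m * J) ^ (1 / 2 - 1 / q) :=
    Continuous.rpow_const (by fun_prop) fun _ => Or.inr hγ
  have c3 : Continuous fun ε : ℝ => 4 * a * R * √ε +
      q / 4 * (√(∫ z in Ω, (u₁ z ^ 2 + u₂ z ^ 2)) * volume.real Ω ^ (1 / q) *
        ((M + ε * V) / m * J) ^ (1 / 2 - 1 / q)) := by
    fun_prop
  have := le_of_tendsto_of_tendsto (c1.continuousWithinAt (s := Ioi 0) (x := 0)).tendsto
    (c3.continuousWithinAt (s := Ioi 0) (x := 0)).tendsto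
    (eventually_nhdsWithin_of_forall fun ε hε => main ε hε)
  simpa using this

theorem transport_sobolev {u u₁ u₂ G : ℝ × ℝ → ℝ} (hu : Continuous u) (hu₁ : Continuous u₁)
    (hu₂ : Continuous u₂) (hd₁ : ∀ x y, HasDerivAt (fun x => u (x, y)) (u₁ (x, y)) x)
    (hd₂ : ∀ x y, HasDerivAt (fun y => u (x, y)) (u₂ (x, y)) y) {q : ℝ} (hq : 2 < q)
    {Ω : Set (ℝ × ℝ)} (hΩ : MeasurableSet Ω) (huΩ : ∀ z, z ∉ Ω → u z = 0)
    (hΩb : Bornology.IsBounded Ω) (hG : Continuous G) (hGpos : ∀ z, 0 < G z)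
    (hGi : Integrable G) (hGs : Integrable fun z => √(G z))
    (hGq : Integrable fun z => G z * √(z.1 ^ 2 + z.2 ^ 2) ^ (2 * q / (q - 2))) :
    √((∫ z in Ω, |u z| ^ q) / ∫ z, G z) * ∫ z, √(G z) ≤
      q / 4 * (√(∫ z in Ω, (u₁ z ^ 2 + u₂ z ^ 2)) * volume.real Ω ^ (1 / q) *
        ((∫ z in Ω, |u z| ^ q) / (∫ z, G z) *
          ∫ z, G z * √(z.1 ^ 2 + z.2 ^ 2) ^ (2 * q / (q - 2))) ^ (1 / 2 - 1 / q)) := by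
  have hγ : 0 ≤ 1 / 2 - 1 / q := sub_nonneg.2 (one_div_le_one_div_of_le two_pos hq.le)
  obtain ⟨a, ha, hΩa⟩ := hΩb.subset_ball_lt 0 0
  have hΩa' : Ω ⊆ Ioo (-a) a ×ˢ Ioo (-a) a := by
    rw [show (0 : ℝ × ℝ) = (0, 0) from rfl, ← ball_prod_same, Real.ball_eq_Ioo] at hΩa
    simpa using hΩa
  have hcover : AECover volume atTop fun R : ℝ => Icc (-R) R ×ˢ Icc (-R) R := by
    have := aecover_Icc (μ := (volume : Measure (ℝ × ℝ))) (l := atTop)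
      (a := fun R : ℝ => (-R, -R)) (b := fun R : ℝ => (R, R))
      (by
        rw [← prod_atBot_atBot_eq]
        exact tendsto_neg_atTop_atBot.prodMk tendsto_neg_atTop_atBot)
      (by
        rw [← prod_atTop_atTop_eq]
        exact tendsto_id.prodMk tendsto_id)
    simpa only [Icc_prod_eq] using this
  have hm : 0 < ∫ z, G z := (integral_pos_iff_support_of_nonneg (fun z => (hGpos z).le) hGi).2 (by
    rw [Function.support_eq_univ fun z => (hGpos z).ne']
    simp)
  have t1 := hcover.integral_tendsto_of_countably_generated hGi
  have t2 := hcover.integral_tendsto_of_countably_generated hGs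
  have t3 := hcover.integral_tendsto_of_countably_generated hGq
  have t4 := (tendsto_const_nhds (x := ∫ z in Ω, |u z| ^ q)).div t1 hm.ne'
  refine le_of_tendsto_of_tendsto (t4.sqrt.mul t2)
    ((((t4.mul t3).rpow_const (Or.inr hγ)).const_mul _).const_mul _) ?_
  filter_upwards [eventually_gt_atTop 0] with R hR
  exact transport_sobolev_square hu hu₁ hu₂ hd₁ hd₂ hq hΩ huΩ ha hΩa' hG hGpos hR

theorem lintegral_rpow_mul_exp_neg_mul {a r : ℝ} (ha : 0 < a) (hr : 0 < r) :
    ∫⁻ t in Ioi 0, ENNReal.ofReal (t ^ (a - 1) * rexp (-(r * t))) =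
      ENNReal.ofReal (r ^ (-a) * Real.Gamma a) := by
  rw [← ofReal_integral_eq_lintegral_ofReal, Real.integral_rpow_mul_exp_neg_mul_Ioi ha hr, one_div,
    inv_rpow hr.le, rpow_neg hr.le]
  · have := integrableOn_rpow_mul_exp_neg_mul_rpow (s := a - 1) (p := 1) (b := r) (by linarith)
      one_pos hr
    simpa [IntegrableOn] using this
  · filter_upwards [ae_restrict_mem measurableSet_Ioi] with t ht
    have : (0 : ℝ) < t := ht
    positivity

/-- The beta integral on the half-line. -/
theorem lintegral_rpow_mul_one_add_rpow_neg {a b : ℝ} (ha : 0 < a) (hb : 0 < b) :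
    ∫⁻ v in Ioi 0, ENNReal.ofReal (v ^ (a - 1) * (1 + v) ^ (-(a + b))) =
      ENNReal.ofReal (Real.Gamma a * Real.Gamma b / Real.Gamma (a + b)) := by
  have hΓ : 0 < Real.Gamma (a + b) := Real.Gamma_pos_of_pos (by positivity)
  have hab : 0 < a + b := by positivity
  have h1 (v : ℝ) (hv : v ∈ Ioi (0 : ℝ)) :
      ENNReal.ofReal (v ^ (a - 1) * (1 + v) ^ (-(a + b))) = ∫⁻ t in Ioi 0,
        ENNReal.ofReal (v ^ (a - 1) / Real.Gamma (a + b)) *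
          ENNReal.ofReal (t ^ (a + b - 1) * rexp (-((1 + v) * t))) := by
    have hv' : (0 : ℝ) < v := hv
    rw [lintegral_const_mul _ (by fun_prop), lintegral_rpow_mul_exp_neg_mul hab (by positivity),
      ← ENNReal.ofReal_mul (by positivity)]
    congr 1
    field_simp
  rw [setLIntegral_congr_fun measurableSet_Ioi h1, lintegral_lintegral_swap]
  swap
  · exact Measurable.aemeasurable (by fun_prop)
  have h2 (t : ℝ) (ht : t ∈ Ioi (0 : ℝ)) : ∫⁻ v in Ioi 0,
        ENNReal.ofReal (v ^ (a - 1) / Real.Gamma (a + b)) *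
          ENNReal.ofReal (t ^ (a + b - 1) * rexp (-((1 + v) * t))) =
      ENNReal.ofReal (Real.Gamma a / Real.Gamma (a + b)) *
        ENNReal.ofReal (t ^ (b - 1) * rexp (-(1 * t))) := by
    have ht' : (0 : ℝ) < t := ht
    calc _ = ∫⁻ v in Ioi 0, ENNReal.ofReal (t ^ (a + b - 1) * rexp (-t) / Real.Gamma (a + b)) *
          ENNReal.ofReal (v ^ (a - 1) * rexp (-(t * v))) := by
          refine setLIntegral_congr_fun measurableSet_Ioi fun v hv => ?_
          have hv' : (0 : ℝ) < v := hv
          rw [← ENNReal.ofReal_mul (by positivity), ← ENNReal.ofReal_mul (by positivity),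
            show -((1 + v) * t) = -t + -(t * v) by ring, Real.exp_add]
          congr 1
          ring
      _ = _ := by
          rw [lintegral_const_mul _ (by fun_prop), lintegral_rpow_mul_exp_neg_mul ha ht',
            ← ENNReal.ofReal_mul (by positivity), ← ENNReal.ofReal_mul
              (div_nonneg (Real.Gamma_pos_of_pos ha).le hΓ.le), one_mul,
            show b - 1 = (a + b - 1) + -a by ring, rpow_add ht']
          congr 1
          ring
  rw [setLIntegral_congr_fun measurableSet_Ioi h2, lintegral_const_mul _ (by fun_prop),
    lintegral_rpow_mul_exp_neg_mul hb one_pos, one_rpow, one_mul, ← ENNReal.ofReal_mul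
      (div_nonneg (Real.Gamma_pos_of_pos ha).le hΓ.le)]
  congr 1
  ring

theorem integrableOn_rpow_mul_one_add_rpow_neg {a b : ℝ} (ha : 0 < a) (hb : 0 < b) :
    IntegrableOn (fun v : ℝ => v ^ (a - 1) * (1 + v) ^ (-(a + b))) (Ioi 0) := by
  refine ⟨Measurable.aestronglyMeasurable (by fun_prop), ?_⟩
  rw [hasFiniteIntegral_iff_ofReal, lintegral_rpow_mul_one_add_rpow_neg ha hb]
  · exact ENNReal.ofReal_lt_top
  · filter_upwards [ae_restrict_mem measurableSet_Ioi] with v hv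
    have : (0 : ℝ) < v := hv
    positivity

theorem integral_rpow_mul_one_add_rpow_neg {a b : ℝ} (ha : 0 < a) (hb : 0 < b) :
    ∫ v in Ioi (0 : ℝ), v ^ (a - 1) * (1 + v) ^ (-(a + b)) =
      Real.Gamma a * Real.Gamma b / Real.Gamma (a + b) := by
  have hΓ := Real.Gamma_pos_of_pos ha
  have hΓ' := Real.Gamma_pos_of_pos hb
  have hΓ'' := Real.Gamma_pos_of_pos (add_pos ha hb)
  rw [integral_eq_lintegral_of_nonneg_ae _ (Measurable.aestronglyMeasurable (by fun_prop)),
    lintegral_rpow_mul_one_add_rpow_neg ha hb, ENNReal.toReal_ofReal (by positivity)]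
  filter_upwards [ae_restrict_mem measurableSet_Ioi] with v hv
  have : (0 : ℝ) < v := hv
  positivity

/-- A planar radial integral in the variable `|z| ^ β`. -/
theorem integrable_and_integral_comp_norm_rpow {β : ℝ} (hβ : 0 < β) {g : ℝ → ℝ}
    (hg : IntegrableOn (fun v => v ^ (2 / β - 1) * g v) (Ioi 0)) :
    Integrable (fun z : ℂ => g (‖z‖ ^ β)) ∧
      ∫ z : ℂ, g (‖z‖ ^ β) = 2 * π / β * ∫ v in Ioi (0 : ℝ), v ^ (2 / β - 1) * g v := by
  have h1 : EqOn (fun x : ℝ => (β * x ^ (β - 1)) • ((x ^ β) ^ (2 / β - 1) * g (x ^ β)))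
      (fun x => β * (x * g (x ^ β))) (Ioi 0) := by
    intro x hx
    have hx' : (0 : ℝ) < x := hx
    simp only [smul_eq_mul]
    have : x ^ (β - 1) * (x ^ β) ^ (2 / β - 1) = x := by
      rw [← rpow_mul hx'.le, ← rpow_add hx', mul_sub, mul_div_cancel₀ _ hβ.ne']
      ring_nf
      exact rpow_one x
    rw [← mul_assoc, mul_assoc β, this, mul_assoc]
  have h2 := integral_comp_rpow_Ioi_of_pos (g := fun v => v ^ (2 / β - 1) * g v) hβ
  have h3 := (integrableOn_Ioi_comp_rpow_iff (fun v => v ^ (2 / β - 1) * g v) hβ.ne').2 hg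
  rw [abs_of_pos hβ, integrableOn_congr_fun h1 measurableSet_Ioi] at h3
  rw [setIntegral_congr_fun measurableSet_Ioi h1, integral_const_mul] at h2
  refine ⟨(integrable_fun_norm_addHaar volume (f := fun x => g (x ^ β))).2 ?_, ?_⟩
  · simpa [IntegrableOn, hβ.ne', Complex.finrank_real_complex] using h3.const_mul β⁻¹
  · rw [integral_fun_norm_addHaar volume (fun x => g (x ^ β)), ← h2]
    simp [Complex.finrank_real_complex, measureReal_def, Complex.volume_ball]
    field_simp

theorem Complex.norm_eq_sqrt_re_sq_add_im_sq (z : ℂ) : ‖z‖ = √(z.re ^ 2 + z.im ^ 2) := by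
  rw [Complex.norm_def, Complex.normSq_apply, sq, sq]

theorem integrable_and_integral_comp_sqrt_rpow {β : ℝ} (hβ : 0 < β) {g : ℝ → ℝ}
    (hg : IntegrableOn (fun v => v ^ (2 / β - 1) * g v) (Ioi 0)) :
    Integrable (fun z : ℝ × ℝ => g (√(z.1 ^ 2 + z.2 ^ 2) ^ β)) ∧
      ∫ z : ℝ × ℝ, g (√(z.1 ^ 2 + z.2 ^ 2) ^ β) =
        2 * π / β * ∫ v in Ioi (0 : ℝ), v ^ (2 / β - 1) * g v := by
  have h := integrable_and_integral_comp_norm_rpow hβ hg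
  simp_rw [Complex.norm_eq_sqrt_re_sq_add_im_sq] at h
  refine ⟨(Complex.volume_preserving_equiv_real_prod.integrable_comp_emb
    Complex.measurableEquivRealProd.measurableEmbedding).1 h.1, ?_⟩
  rw [← h.2, ← Complex.volume_preserving_equiv_real_prod.integral_comp
    Complex.measurableEquivRealProd.measurableEmbedding]
  rfl

/-- The planar beta integral in the variable `v = |z| ^ β`, where `2 / β = 1 - s`. -/
theorem integrable_and_integral_one_add_sqrt_rpow {s : ℝ} (hs1 : s < 1) {a b : ℝ}
    (ha : 1 - s ≤ a) (hb : 0 < b) :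
    Integrable (fun z : ℝ × ℝ => (√(z.1 ^ 2 + z.2 ^ 2) ^ (2 / (1 - s))) ^ (a - (1 - s)) *
        (1 + √(z.1 ^ 2 + z.2 ^ 2) ^ (2 / (1 - s))) ^ (-(a + b))) ∧
      ∫ z : ℝ × ℝ, (√(z.1 ^ 2 + z.2 ^ 2) ^ (2 / (1 - s))) ^ (a - (1 - s)) *
        (1 + √(z.1 ^ 2 + z.2 ^ 2) ^ (2 / (1 - s))) ^ (-(a + b)) =
          π * (1 - s) * (Real.Gamma a * Real.Gamma b / Real.Gamma (a + b)) := by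
  have hs : 0 < 1 - s := by linarith
  have heq : EqOn (fun v : ℝ => v ^ (a - 1) * (1 + v) ^ (-(a + b)))
      (fun v => v ^ (2 / (2 / (1 - s)) - 1) * (v ^ (a - (1 - s)) * (1 + v) ^ (-(a + b))))
      (Ioi 0) := by
    intro v hv
    dsimp only
    rw [← mul_assoc, ← rpow_add hv, div_div_cancel₀ two_ne_zero]
    ring_nf
  have h := integrable_and_integral_comp_sqrt_rpow (β := 2 / (1 - s)) (by positivity)
    (g := fun v => v ^ (a - (1 - s)) * (1 + v) ^ (-(a + b)))
    ((integrableOn_congr_fun heq measurableSet_Ioi).1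
      (integrableOn_rpow_mul_one_add_rpow_neg (hs.trans_le ha) hb))
  refine ⟨h.1, h.2.trans ?_⟩
  rw [← setIntegral_congr_fun measurableSet_Ioi heq,
    integral_rpow_mul_one_add_rpow_neg (hs.trans_le ha) hb]
  field_simp

/-- The Sobolev inequality in the plane for the exponent `2 / s`, normalised by the measure of the
domain. -/
theorem transport_sobolev_gamma {u u₁ u₂ : ℝ × ℝ → ℝ} {s : ℝ} {Ω : Set (ℝ × ℝ)}
    (hu : Continuous u) (hu₁ : Continuous u₁) (hu₂ : Continuous u₂)
    (hd₁ : ∀ x y, HasDerivAt (fun x => u (x, y)) (u₁ (x, y)) x)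
    (hd₂ : ∀ x y, HasDerivAt (fun y => u (x, y)) (u₂ (x, y)) y)
    (hs0 : 0 < s) (hs1 : s < 1) (hΩ : MeasurableSet Ω) (huΩ : ∀ z, z ∉ Ω → u z = 0)
    (hΩb : Bornology.IsBounded Ω) :
    (∫ z in Ω, |u z| ^ (2 / s)) ^ (s / 2) ≤
      1 / 2 * ((1 - s) / s) ^ ((1 - s) / 2) *
        (π * (Real.Gamma (1 + s) * Real.Gamma (2 - s))) ^ (-(1 / 2 : ℝ)) *
        √(∫ z in Ω, (u₁ z ^ 2 + u₂ z ^ 2)) * volume.real Ω ^ (s / 2) := by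
  have hs : 0 < 1 - s := by linarith
  set m := π * (Real.Gamma (1 + s) * Real.Gamma (2 - s)) with hm
  have hΓ1 := Real.Gamma_pos_of_pos (show 0 < 1 + s by linarith)
  have hΓ2 := Real.Gamma_pos_of_pos (show 0 < 2 - s by linarith)
  have hm0 : 0 < m := by positivity
  have hadd1 : Real.Gamma (1 + s) = s * Real.Gamma s := by
    rw [add_comm, Real.Gamma_add_one hs0.ne']
  have hadd2 : Real.Gamma (2 - s) = (1 - s) * Real.Gamma (1 - s) := by
    rw [← Real.Gamma_add_one hs.ne']
    ring_nf
  set ρ : ℝ × ℝ → ℝ := fun z => √(z.1 ^ 2 + z.2 ^ 2) ^ (2 / (1 - s)) with hρ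
  have hρ0 (z) : 0 ≤ ρ z := by positivity
  have hρc : Continuous ρ := by
    have : 0 ≤ 2 / (1 - s) := by positivity
    fun_prop (disch := assumption)
  set G : ℝ × ℝ → ℝ := fun z => (1 + ρ z) ^ (-2 : ℝ) with hG
  have hGpos (z) : 0 < G z := rpow_pos_of_pos (by linarith [hρ0 z]) _
  have hGc : Continuous G :=
    (hρc.const_add 1).rpow_const fun z => Or.inl (by linarith [hρ0 z])
  have hsqrt (z) : √(G z) = (1 + ρ z) ^ (-1 : ℝ) := by
    rw [hG, sqrt_eq_rpow, ← rpow_mul (by linarith [hρ0 z])]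
    norm_num
  have hβ : 2 * (2 / s) / (2 / s - 2) = 2 / (1 - s) := by
    field_simp
  have hI := integrable_and_integral_one_add_sqrt_rpow hs1 (a := 1 - s) (b := s) le_rfl hs0
  have hM := integrable_and_integral_one_add_sqrt_rpow hs1 (a := 1 - s) (b := 1 + s) le_rfl
    (by linarith)
  have hJ := integrable_and_integral_one_add_sqrt_rpow hs1 (a := 2 - s) (b := s) (by linarith)
    hs0
  have e1 : -(1 - s + s) = -1 := by ring
  have e2 : -(1 - s + (1 + s)) = -2 := by ring
  have e3 : -(2 - s + s) = -2 := by ring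
  have e4 : 2 - s - (1 - s) = 1 := by ring
  rw [e1] at hI
  rw [e2] at hM
  rw [e3, e4] at hJ
  simp only [sub_self, rpow_zero, one_mul, rpow_one] at hI hM hJ
  have hGρ : (fun z => G z * ρ z) = fun z => ρ z * G z := funext fun z => mul_comm _ _
  have hGs : (fun z => √(G z)) = fun z => (1 + ρ z) ^ (-1 : ℝ) := funext hsqrt
  have hI2 : ∫ z, √(G z) = m / s := by
    rw [hGs, hI.2, hm, hadd1, hadd2, show 1 - s + s = 1 by ring, Real.Gamma_one]
    field_simp
  have hM2 : ∫ z, G z = m := by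
    rw [hM.2, hm, hadd2, show 1 - s + (1 + s) = 2 by ring, Real.Gamma_two]
    ring
  have hJ2 : ∫ z, G z * ρ z = (1 - s) / s * m := by
    rw [hGρ, hJ.2, hm, hadd1, show 2 - s + s = 2 by ring, Real.Gamma_two]
    field_simp
  have key := transport_sobolev hu hu₁ hu₂ hd₁ hd₂ (q := 2 / s)
    (by rw [lt_div_iff₀ hs0]; linarith) hΩ huΩ hΩb hGc hGpos hM.1 (hGs ▸ hI.1)
    (by rw [hβ]; exact hGρ ▸ hJ.1)
  rw [hβ, hI2, hM2, show ∫ z, G z * √(z.1 ^ 2 + z.2 ^ 2) ^ (2 / (1 - s)) = _ from hJ2,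
    show 1 / (2 / s) = s / 2 by field_simp] at key
  set M := ∫ z in Ω, |u z| ^ (2 / s)
  set S := √(∫ z in Ω, (u₁ z ^ 2 + u₂ z ^ 2))
  set V := volume.real Ω ^ (s / 2)
  have hM0 : 0 ≤ M := integral_nonneg fun z => by positivity
  obtain hM0 | hM0 := hM0.eq_or_lt
  · rw [← hM0, zero_rpow (by positivity)]
    positivity
  have hc : 0 < (1 - s) / s := by positivity
  have e5 : √(M / m) = M ^ (s / 2) * M ^ ((1 - s) / 2) * m ^ (-(1 / 2 : ℝ)) := by
    rw [← rpow_add hM0, sqrt_div hM0.le, sqrt_eq_rpow, sqrt_eq_rpow, rpow_neg hm0.le]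
    ring_nf
  have e6 : (M / m * ((1 - s) / s * m)) ^ (1 / 2 - s / 2) =
      ((1 - s) / s) ^ ((1 - s) / 2) * M ^ ((1 - s) / 2) := by
    rw [← mul_rpow hc.le hM0.le]
    congr 1
    · field_simp
    · ring
  have e7 : m ^ (-(1 / 2 : ℝ)) * m ^ (-(1 / 2 : ℝ)) * m = 1 := by
    rw [← rpow_add hm0]
    norm_num [rpow_neg_one, hm0.ne']
  rw [e5, e6] at key
  have hMs : 0 < M ^ ((1 - s) / 2) := by positivity
  have hmr : 0 < m ^ (-(1 / 2 : ℝ)) := by positivity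
  refine le_of_mul_le_mul_right ?_ (mul_pos hMs (inv_pos.2 hs0))
  calc M ^ (s / 2) * (M ^ ((1 - s) / 2) * s⁻¹)
      = M ^ (s / 2) * M ^ ((1 - s) / 2) * m ^ (-(1 / 2 : ℝ)) * (m / s) * m ^ (-(1 / 2 : ℝ)) := by
        linear_combination (-(M ^ (s / 2) * M ^ ((1 - s) / 2) * s⁻¹)) * e7
    _ ≤ _ := mul_le_mul_of_nonneg_right key hmr.le
    _ = _ := by
        field_simp
        ring

/-- The sharp planar Sobolev inequality for functions supported in a bounded set. -/
theorem rpow_setIntegral_le_sqrt_gradNormSq {f : ℂ → ℝ} (hf : ContDiff ℝ 1 f) {Ω : Set ℂ} {s : ℝ}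
    (hs0 : 0 < s) (hs1 : s < 1) (hΩ : MeasurableSet Ω) (hΩb : Bornology.IsBounded Ω)
    (hfΩ : ∀ z, z ∉ Ω → f z = 0) :
    (∫ z in Ω, |f z| ^ (2 / s)) ^ (s / 2) ≤
      1 / 2 * ((1 - s) / s) ^ ((1 - s) / 2) *
        (π * (Real.Gamma (1 + s) * Real.Gamma (2 - s))) ^ (-(1 / 2 : ℝ)) *
        √(∫ z in Ω, gradNormSq f z) * volume.real Ω ^ (s / 2) := by
  set e := Complex.measurableEquivRealProd
  have he : MeasurePreserving e.symm :=
    Complex.volume_preserving_equiv_real_prod.symm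
  have hc : Continuous e.symm := Complex.equivRealProdCLM.symm.continuous
  have hf' := hf.continuous_fderiv one_ne_zero
  have hfd := hf.differentiable one_ne_zero
  have hb : Bornology.IsBounded (e.symm ⁻¹' Ω) := by
    have : e.symm ⁻¹' Ω = Complex.equivRealProdCLM '' Ω :=
      (Complex.equivRealProdCLM.toEquiv.image_eq_preimage_symm Ω).symm
    rw [this]
    exact Complex.equivRealProdCLM.lipschitz.isBounded_image hΩb
  have hxy (x y : ℝ) : e.symm (x, y) = x + y * Complex.I := Complex.mk_eq_add_mul_I x y
  have hd₁ (x y : ℝ) : HasDerivAt (fun x : ℝ => f (e.symm (x, y)))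
      (fderiv ℝ f (e.symm (x, y)) 1) x := by
    have h : HasDerivAt (fun x : ℝ => e.symm (x, y)) 1 x := by
      simp_rw [hxy]
      exact (Complex.ofRealCLM.hasDerivAt (x := x)).add_const _
    exact (hfd _).hasFDerivAt.comp_hasDerivAt x h
  have hd₂ (x y : ℝ) : HasDerivAt (fun y : ℝ => f (e.symm (x, y)))
      (fderiv ℝ f (e.symm (x, y)) Complex.I) y := by
    have h : HasDerivAt (fun y : ℝ => e.symm (x, y)) Complex.I y := by
      simp_rw [hxy]
      simpa using ((Complex.ofRealCLM.hasDerivAt (x := y)).mul_const Complex.I).const_add (x : ℂ)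
    exact (hfd _).hasFDerivAt.comp_hasDerivAt y h
  have h := transport_sobolev_gamma (u := fun z => f (e.symm z))
    (u₁ := fun z => fderiv ℝ f (e.symm z) 1) (u₂ := fun z => fderiv ℝ f (e.symm z) Complex.I)
    (hf.continuous.comp hc) ((hf'.comp hc).clm_apply continuous_const)
    ((hf'.comp hc).clm_apply continuous_const) hd₁ hd₂ hs0 hs1
    (e.symm.measurable hΩ) (fun z hz => hfΩ _ hz) hb
  have h1 := he.setIntegral_preimage_emb e.symm.measurableEmbedding (fun z => |f z| ^ (2 / s)) Ω
  have h2 := he.setIntegral_preimage_emb e.symm.measurableEmbedding (gradNormSq f) Ω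
  have h3 : volume.real (e.symm ⁻¹' Ω) = volume.real Ω :=
    he.measureReal_preimage hΩ.nullMeasurableSet
  rw [← h1, ← h2, ← h3]
  exact h

/-- Comparison of two forms of the sharp constant. -/
theorem half_mul_rpow_mul_rpow_eq {s P : ℝ} (hs0 : 0 < s) (hs1 : s < 1) (hP : 0 < P) :
    1 / 2 * ((1 - s) / s) ^ ((1 - s) / 2) * (π * P) ^ (-(1 / 2 : ℝ)) =
      ((1 - s) / (2 * s)) ^ ((1 - s) / 2) * (√π * 2 ^ ((1 + s) / 2))⁻¹ * P ^ (-(1 / 2 : ℝ)) := by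
  have hs : 0 < 1 - s := by linarith
  have h2 : (2 : ℝ) ^ ((1 - s) / 2) * 2 ^ ((1 + s) / 2) = 2 := by
    rw [← rpow_add two_pos, show (1 - s) / 2 + (1 + s) / 2 = 1 by ring, rpow_one]
  rw [show (1 - s) / s = (1 - s) / (2 * s) * 2 by field_simp, mul_rpow (by positivity) two_pos.le,
    mul_rpow pi_pos.le hP.le, rpow_neg pi_pos.le, ← sqrt_eq_rpow]
  field_simp
  linear_combination h2

end

/-- The Sobolev–Poincaré inequality with the explicit constant
`((p−1)/(2−p))^((p−1)/p) · (√π · 2^(1/p))⁻¹ · |Ω|^(1/r) · (Γ(2/p)Γ(3−2/p))^(−1/2)`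
for smooth compactly supported functions on a bounded open set `Ω ⊂ ℂ`. -/
theorem sobolev_poincare_const (Ω : Set ℂ) (hΩo : IsOpen Ω) (hΩb : Bornology.IsBounded Ω)
    (r p : ℝ) (hr : 2 ≤ r) (hp1 : 2 * r / (r + 2) < p) (hp2 : p < 2)
    (f : ℂ → ℝ) (hf : ContDiff ℝ (⊤ : ℕ∞) f) (hfc : HasCompactSupport f)
    (hfs : tsupport f ⊆ Ω) :
    (∫ z in Ω, |f z| ^ r) ^ (1 / r) ≤
      ((p - 1) / (2 - p)) ^ ((p - 1) / p) * (Real.sqrt π * (2 : ℝ) ^ (1 / p))⁻¹ *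
        (volume Ω).toReal ^ (1 / r) *
        (Real.Gamma (2 / p) * Real.Gamma (3 - 2 / p)) ^ (-(1 / 2 : ℝ)) *
        (∫ z in Ω, gradNormSq f z) ^ (1 / 2 : ℝ) := by
  obtain ⟨s, hs⟩ : ∃ s, s = 2 / p - 1 := ⟨_, rfl⟩
  have hp0 : 0 < p := lt_of_le_of_lt (by positivity) hp1
  have hs0 : 0 < s := by
    rw [hs, sub_pos, lt_div_iff₀ hp0]
    linarith
  have hrp : 2 * r < p * (r + 2) := (div_lt_iff₀ (by linarith)).1 hp1
  have hrs : s * r < 2 := by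
    rw [hs, sub_mul, one_mul, div_mul_eq_mul_div, sub_lt_iff_lt_add, div_lt_iff₀ hp0]
    linarith
  have hs1 : s < 1 := by nlinarith
  have hps : p = 2 / (1 + s) := by
    rw [hs]
    field_simp
    ring
  have hfΩ (z : ℂ) (hz : z ∉ Ω) : f z = 0 := image_eq_zero_of_notMem_tsupport fun h => hz (hfs h)
  have : IsFiniteMeasure (volume.restrict Ω) := ⟨by simpa using hΩb.measure_lt_top⟩
  obtain ⟨C, hC⟩ := hfc.exists_bound_of_continuous hf.continuous
  have hholder := integral_rpow_le_rpow_integral_mul_measureReal (μ := volume.restrict Ω)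
    (w := fun z => |f z|) (q := 2 / s) hf.continuous.abs.aestronglyMeasurable
    (fun z => abs_nonneg _) (ae_of_all _ hC) (show 0 < r by linarith)
    (by rwa [lt_div_iff₀ hs0, mul_comm])
  have hsob := rpow_setIntegral_le_sqrt_gradNormSq (hf.of_le (by exact_mod_cast le_top)) hs0 hs1
    hΩo.measurableSet hΩb hfΩ
  have hP : 0 < Real.Gamma (1 + s) * Real.Gamma (2 - s) :=
    mul_pos (Real.Gamma_pos_of_pos (by linarith)) (Real.Gamma_pos_of_pos (by linarith))
  rw [half_mul_rpow_mul_rpow_eq hs0 hs1 hP] at hsob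
  rw [measureReal_restrict_apply_univ] at hholder
  have hM : 0 ≤ ∫ z in Ω, |f z| ^ (2 / s) := integral_nonneg fun z => by positivity
  have e1 : (p - 1) / (2 - p) = (1 - s) / (2 * s) := by
    have h1 : p - 1 = (1 - s) / (1 + s) := by
      rw [hps]
      field_simp
      ring
    have h2 : 2 - p = 2 * s / (1 + s) := by
      rw [hps]
      field_simp
      ring
    rw [h1, h2, div_div_div_cancel_right₀ (by positivity)]
  have e2 : (p - 1) / p = (1 - s) / 2 := by
    rw [hps]
    field_simp
    ring
  have e3 : 1 / p = (1 + s) / 2 := by rw [hps, one_div_div]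
  have e4 : 2 / p = 1 + s := by rw [hs]; ring
  have e5 : 3 - 2 / p = 2 - s := by rw [e4]; ring
  have e6 :
      volume.real Ω ^ (s / 2) * volume.real Ω ^ (1 / r - s / 2) = volume.real Ω ^ (1 / r) := by
    rw [← rpow_add_of_nonneg measureReal_nonneg (by positivity)]
    · ring_nf
    · rw [sub_nonneg, div_le_div_iff₀ two_pos (by linarith)]
      linarith
  rw [e1, e2, e3, e5, e4, ← measureReal_def, ← sqrt_eq_rpow, ← e6]
  calc (∫ z in Ω, |f z| ^ r) ^ (1 / r)
      ≤ ((∫ z in Ω, |f z| ^ (2 / s)) ^ (r / (2 / s)) * volume.real Ω ^ (1 - r / (2 / s))) ^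
          (1 / r) := by gcongr
    _ = (∫ z in Ω, |f z| ^ (2 / s)) ^ (s / 2) * volume.real Ω ^ (1 / r - s / 2) := by
        rw [mul_rpow (by positivity) (by positivity), ← rpow_mul hM, ← rpow_mul measureReal_nonneg]
        congr 2 <;> field_simp
    _ ≤ _ := mul_le_mul_of_nonneg_right hsob (by positivity)
    _ = _ := by ring
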